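/- Let n, r be integers with 0 < r < n such that at least one of n, r is odd, and let p be a prime not dividing n. Then there exist β ≥ 1 and a linear code C ⊆ GF(p^β)^n with dim C = r, minimum distance (least Hamming weight of a nonzero codeword) equal to n − r + 1, and C ∩ C^⊥ = {0} (dual with respect to the standard bilinear form); that is, an LCD MDS (n, r, n−r+1) code exists over a finite field of characteristic p. -/

import Mathlib

/-- Hamming weight of a vector: the number of nonzero coordinates. -/
noncomputable def hWeight {F : Type*} [Field F] {n : ℕ} (v : Fin n → F) : ℕ :=
  open scoped Classical in
  (Finset.univ.filter fun m => v m ≠ 0).card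

/-- The dual code of `C` with respect to the standard bilinear form. -/
def dualCode {F : Type*} [Field F] {n : ℕ} (C : Submodule F (Fin n → F)) :
    Submodule F (Fin n → F) where
  carrier := {v | ∀ u ∈ C, ∑ m, u m * v m = 0}
  add_mem' := by
    intro a b ha hb u hu
    have h : ∑ m, u m * (a + b) m = (∑ m, u m * a m) + ∑ m, u m * b m := by
      rw [← Finset.sum_add_distrib]
      exact Finset.sum_congr rfl fun m _ => by simp [mul_add]
    rw [h, ha u hu, hb u hu, add_zero]
  zero_mem' := by intro u hu; simp
  smul_mem' := by
    intro c a ha u hu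
    have h : ∑ m, u m * (c • a) m = c * ∑ m, u m * a m := by
      rw [Finset.mul_sum]
      exact Finset.sum_congr rfl fun m _ => by simp [smul_eq_mul]; ring
    rw [h, ha u hu, mul_zero]

/-- Minimum distance of a code: the least Hamming weight of a nonzero codeword. -/
noncomputable def minDist {F : Type*} [Field F] {n : ℕ} (C : Submodule F (Fin n → F)) : ℕ :=
  sInf {d | ∃ v ∈ C, v ≠ 0 ∧ hWeight v = d}

/-!
Take a generator matrix `G` of a Reed–Solomon code. All its maximal minors are nonzero, which makes
the code MDS and survives rescaling the columns by nonzero scalars. By Massey's criterion the code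
is LCD as soon as the Gram matrix `G Gᵀ` is nonsingular. Fix `r` of the columns and multiply the
others by `t`: the Gram matrix becomes `A + t² B`, where `A` is the Gram matrix of the fixed `r × r`
block. Its determinant is a polynomial in `t` of degree at most `2r`, nonzero at `t = 0`, so a field
with more than `2r + 1` elements contains a nonzero `t` at which it does not vanish.
-/

open Matrix Module Cardinal

section Weight

variable {F : Type*} [Field F] {n : ℕ} {C : Submodule F (Fin n → F)}

open scoped Classical in
theorem hWeight_add_card_zeros (v : Fin n → F) :
    hWeight v + (Finset.univ.filter fun m => v m = 0).card = n := by
  rw [hWeight, add_comm, Finset.card_filter_add_card_filter_not, Finset.card_fin]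

theorem minDist_le_hWeight {v : Fin n → F} (hv : v ∈ C) (hv0 : v ≠ 0) : minDist C ≤ hWeight v :=
  Nat.sInf_le ⟨v, hv, hv0, rfl⟩

theorem exists_hWeight_eq_minDist (hC : C ≠ ⊥) : ∃ v ∈ C, v ≠ 0 ∧ hWeight v = minDist C := by
  obtain ⟨v, hv, hv0⟩ := C.ne_bot_iff.1 hC
  exact Nat.sInf_mem (s := {d | ∃ v ∈ C, v ≠ 0 ∧ hWeight v = d}) ⟨_, v, hv, hv0, rfl⟩

theorem exists_ne_zero_forall_eq_zero_of_card_lt_finrank {s : Finset (Fin n)}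
    (hs : s.card < finrank F C) : ∃ v ∈ C, v ≠ 0 ∧ ∀ m ∈ s, v m = 0 := by
  let restrict : C →ₗ[F] (s → F) := LinearMap.funLeft F F Subtype.val ∘ₗ C.subtype
  have hker : LinearMap.ker restrict ≠ ⊥ :=
    LinearMap.ker_ne_bot_of_finrank_lt (by simpa using hs)
  obtain ⟨v, hv, hv0⟩ := (Submodule.ne_bot_iff _).1 hker
  exact ⟨v, v.2, by simpa using hv0, fun m hm => congrFun hv ⟨m, hm⟩⟩

theorem minDist_add_finrank_le (hC : C ≠ ⊥) : minDist C + finrank F C ≤ n + 1 := by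
  classical
  have hpos : 0 < finrank F C := Submodule.one_le_finrank_iff.2 hC
  have hle : finrank F C ≤ n := by simpa using C.finrank_le
  obtain ⟨s, -, hs⟩ := Finset.exists_subset_card_eq
    (s := (Finset.univ : Finset (Fin n))) (n := finrank F C - 1) (by rw [Finset.card_fin]; lia)
  obtain ⟨v, hv, hv0, hvs⟩ := exists_ne_zero_forall_eq_zero_of_card_lt_finrank
    (C := C) (s := s) (by lia)
  have hzeros : s.card ≤ (Finset.univ.filter fun m => v m = 0).card :=
    Finset.card_le_card fun m hm => by simpa using hvs m hm
  have := minDist_le_hWeight hv hv0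
  have := hWeight_add_card_zeros v
  lia

end Weight

section RowCode

variable {F : Type*} [Field F] {ι : Type*} [Fintype ι] {n : ℕ}

/-- The linear code generated by the rows of `G`; its codewords are the vectors `x ᵥ* G`. -/
def rowCode (G : Matrix ι (Fin n) F) : Submodule F (Fin n → F) :=
  LinearMap.range G.vecMulLinear

variable {G : Matrix ι (Fin n) F}

theorem vecMul_mem_rowCode (x : ι → F) : x ᵥ* G ∈ rowCode G :=
  ⟨x, rfl⟩

theorem mulVec_eq_zero_of_mem_dualCode {v : Fin n → F} (hv : v ∈ dualCode (rowCode G)) :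
    G *ᵥ v = 0 := by
  classical
  ext i
  simpa [mulVec, dotProduct] using hv _ (vecMul_mem_rowCode (Pi.single i 1))

theorem rowCode_inf_dualCode_eq_bot [DecidableEq ι] (hG : (G * Gᵀ).det ≠ 0) :
    rowCode G ⊓ dualCode (rowCode G) = ⊥ := by
  rw [eq_bot_iff]
  rintro _ ⟨⟨x, rfl⟩, hx⟩
  have hGram : (G * Gᵀ) *ᵥ x = 0 := by
    rw [← mulVec_mulVec, mulVec_transpose]
    exact mulVec_eq_zero_of_mem_dualCode hx
  rw [eq_zero_of_mulVec_eq_zero hG hGram, map_zero]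
  exact Submodule.zero_mem _

end RowCode

section MaximalMinors

variable {F : Type*} [Field F] {ι κ : Type*} [Fintype ι] [DecidableEq ι]

/-- All maximal minors of `G` are nonzero: the property of a generator matrix that makes the code it
generates MDS. A minor is given by an injective choice `e` of columns, so the condition is vacuous
when `G` has fewer columns than rows. -/
def HasNonzeroMaximalMinors (G : Matrix ι κ F) : Prop :=
  ∀ e : ι ↪ κ, (G.submatrix id e).det ≠ 0

namespace HasNonzeroMaximalMinors

theorem mul_diagonal [Fintype κ] [DecidableEq κ] {G : Matrix ι κ F}
    (hG : HasNonzeroMaximalMinors G) {c : κ → F} (hc : ∀ m, c m ≠ 0) :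
    HasNonzeroMaximalMinors (G * diagonal c) := by
  intro e
  have hsub : (G * diagonal c).submatrix id e = G.submatrix id e * diagonal (c ∘ e) := by
    ext i j
    simp
  rw [hsub, det_mul, det_diagonal]
  exact mul_ne_zero (hG e) (Finset.prod_ne_zero_iff.2 fun i _ => hc (e i))

variable {n : ℕ} {G : Matrix ι (Fin n) F}

theorem lt_hWeight_vecMul_add_card (hG : HasNonzeroMaximalMinors G) {x : ι → F} (hx : x ≠ 0) :
    n < hWeight (x ᵥ* G) + Fintype.card ι := by
  classical
  by_contra! hle
  let zeros := Finset.univ.filter fun m => (x ᵥ* G) m = 0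
  have hcard : Fintype.card ι ≤ Fintype.card zeros := by
    rw [Fintype.card_coe]
    have : hWeight (x ᵥ* G) + zeros.card = n := hWeight_add_card_zeros (x ᵥ* G)
    lia
  obtain ⟨e⟩ := Function.Embedding.nonempty_of_card_le hcard
  refine hx (eq_zero_of_vecMul_eq_zero (hG (e.trans (Function.Embedding.subtype _))) ?_)
  ext i
  exact (Finset.mem_filter.1 (e i).2).2

theorem finrank_rowCode (hG : HasNonzeroMaximalMinors G) (hn : Fintype.card ι ≤ n) :
    finrank F (rowCode G) = Fintype.card ι := by
  obtain ⟨e⟩ : Nonempty (ι ↪ Fin n) := Function.Embedding.nonempty_of_card_le (by simpa using hn)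
  have hinj : Function.Injective G.vecMulLinear := by
    refine (injective_iff_map_eq_zero _).2 fun x hx => eq_zero_of_vecMul_eq_zero (hG e) ?_
    ext i
    exact congrFun hx (e i)
  rw [rowCode, LinearMap.finrank_range_of_inj hinj, finrank_fintype_fun_eq_card]

theorem minDist_rowCode [Nonempty ι] (hG : HasNonzeroMaximalMinors G)
    (hn : Fintype.card ι ≤ n) : minDist (rowCode G) = n - Fintype.card ι + 1 := by
  have hrank := hG.finrank_rowCode hn
  have hC : rowCode G ≠ ⊥ := Submodule.one_le_finrank_iff.1 (hrank.symm ▸ Fintype.card_pos)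
  have hupper : minDist (rowCode G) + Fintype.card ι ≤ n + 1 := hrank ▸ minDist_add_finrank_le hC
  obtain ⟨_, ⟨x, rfl⟩, hx, hmin⟩ := exists_hWeight_eq_minDist hC
  have hlower : n < minDist (rowCode G) + Fintype.card ι :=
    hmin ▸ hG.lt_hWeight_vecMul_add_card fun h => hx (by rw [h, map_zero])
  lia

end HasNonzeroMaximalMinors

theorem hasNonzeroMaximalMinors_of_pow (r : ℕ) {a : κ → F} (ha : Function.Injective a) :
    HasNonzeroMaximalMinors (of fun (i : Fin r) m => a m ^ (i : ℕ)) := by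
  intro e
  change (vandermonde (a ∘ e))ᵀ.det ≠ 0
  rw [det_transpose, det_vandermonde_ne_zero_iff]
  exact ha.comp e.injective

end MaximalMinors

section Rescaling

variable {F : Type*} [Field F] {ι κ : Type*} [Fintype ι] [Fintype κ] [DecidableEq κ]

theorem exists_gram_mul_diagonal_extend_eq_add_sq_smul (G : Matrix ι κ F) (e : ι ↪ κ) :
    ∃ B : Matrix ι ι F, ∀ t : F,
      let c : κ → F := Function.extend e 1 (Function.const κ t)
      (G * diagonal c) * (G * diagonal c)ᵀ =
        G.submatrix id e * (G.submatrix id e)ᵀ + t ^ 2 • B := by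
  refine ⟨of fun i j => ∑ m ∈ (Finset.univ.map e)ᶜ, G i m * G j m, ?_⟩
  intro t c
  ext i j
  have hinside : ∑ m ∈ Finset.univ.map e, G i m * c m * (G j m * c m) =
      ∑ k, G i (e k) * G j (e k) := by
    simp [c, e.injective.extend_apply]
  have houtside : ∑ m ∈ (Finset.univ.map e)ᶜ, G i m * c m * (G j m * c m) =
      t ^ 2 * ∑ m ∈ (Finset.univ.map e)ᶜ, G i m * G j m := by
    rw [Finset.mul_sum]
    refine Finset.sum_congr rfl fun m hm => ?_
    have hcm : c m = t := Function.extend_apply' _ _ _ (by simpa using hm)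
    rw [hcm]
    ring
  calc ((G * diagonal c) * (G * diagonal c)ᵀ) i j
      = ∑ m, G i m * c m * (G j m * c m) := by
        rw [mul_apply]
        simp only [transpose_apply, Matrix.mul_diagonal]
    _ = ∑ k, G i (e k) * G j (e k) + t ^ 2 * ∑ m ∈ (Finset.univ.map e)ᶜ, G i m * G j m := by
        rw [← Finset.sum_add_sum_compl (Finset.univ.map e), hinside, houtside]

variable [DecidableEq ι]

open Polynomial in
theorem exists_ne_zero_det_add_sq_smul_ne_zero {A : Matrix ι ι F} (hA : A.det ≠ 0)
    (B : Matrix ι ι F) (hF : ((2 * Fintype.card ι + 1 : ℕ) : Cardinal) < #F) :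
    ∃ t : F, t ≠ 0 ∧ (A + t ^ 2 • B).det ≠ 0 := by
  let P : F[X] := ((X : F[X]) • B.map C + A.map C).det
  have heval (s : F) : P.eval s = (A + s • B).det := by
    rw [← coe_evalRingHom, RingHom.map_det]
    congr 1
    ext i j
    simp [mul_comm s, add_comm (A i j)]
  have hP : P ≠ 0 := fun h => hA (by simpa [h] using (heval 0).symm)
  have hdeg : (X * expand F 2 P).natDegree ≤ 2 * Fintype.card ι + 1 := by
    have : P.natDegree ≤ Fintype.card ι := natDegree_det_X_add_C_le B A
    rw [natDegree_X_mul ((expand_ne_zero two_pos).2 hP), natDegree_expand]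
    lia
  obtain ⟨t, ht⟩ := exists_eval_ne_zero_of_natDegree_lt_card (X * expand F 2 P)
    (mul_ne_zero X_ne_zero ((expand_ne_zero two_pos).2 hP))
    ((Nat.cast_le.2 hdeg).trans_lt hF)
  rw [eval_mul, eval_X, expand_eval, heval, mul_ne_zero_iff] at ht
  exact ⟨t, ht⟩

theorem exists_rescaling_gram_det_ne_zero (G : Matrix ι κ F) (e : ι ↪ κ)
    (he : (G.submatrix id e).det ≠ 0)
    (hF : ((2 * Fintype.card ι + 1 : ℕ) : Cardinal) < #F) :
    ∃ c : κ → F, (∀ m, c m ≠ 0) ∧ ((G * diagonal c) * (G * diagonal c)ᵀ).det ≠ 0 := by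
  have hblock : (G.submatrix id e * (G.submatrix id e)ᵀ).det ≠ 0 := by
    rw [det_mul, det_transpose]
    exact mul_ne_zero he he
  obtain ⟨B, hB⟩ := exists_gram_mul_diagonal_extend_eq_add_sq_smul G e
  obtain ⟨t, ht0, ht⟩ := exists_ne_zero_det_add_sq_smul_ne_zero hblock B hF
  refine ⟨Function.extend e 1 (Function.const κ t), fun m => ?_, by rwa [hB t]⟩
  by_cases hm : ∃ k, e k = m
  · obtain ⟨k, rfl⟩ := hm
    simp [e.injective.extend_apply]
  · rwa [Function.extend_apply' _ _ _ hm]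

end Rescaling

theorem lt_mk_galoisField (p : ℕ) [Fact p.Prime] {k : ℕ} (hk : k ≠ 0) :
    (k : Cardinal) < #(GaloisField p k) := by
  rw [← Nat.cast_card, GaloisField.card p k hk]
  exact_mod_cast Nat.lt_pow_self (Fact.out : p.Prime).one_lt

theorem exists_LCD_MDS_code_general {F : Type*} [Field F] {n r : ℕ} (hr0 : 0 < r) (hrn : r ≤ n)
    (hn : (n : Cardinal) ≤ #F) (hr : ((2 * r + 1 : ℕ) : Cardinal) < #F) :
    ∃ C : Submodule F (Fin n → F),
      finrank F C = r ∧ minDist C = n - r + 1 ∧ C ⊓ dualCode C = ⊥ := by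
  obtain ⟨a⟩ : Nonempty (Fin n ↪ F) := Cardinal.lift_mk_le'.1 (by simpa using hn)
  have : NeZero r := ⟨hr0.ne'⟩
  have hminors := hasNonzeroMaximalMinors_of_pow r a.injective
  obtain ⟨c, hc, hGram⟩ := exists_rescaling_gram_det_ne_zero _ (Fin.castLEEmb hrn)
    (hminors _) (by rwa [Fintype.card_fin])
  have hcode := hminors.mul_diagonal hc
  refine ⟨rowCode _, ?_, ?_, rowCode_inf_dualCode_eq_bot hGram⟩
  · simpa using hcode.finrank_rowCode (by simpa using hrn)
  · simpa using hcode.minDist_rowCode (by simpa using hrn)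

/-- For `0 < r < n` with at least one of `n, r` odd and a prime `p` not
dividing `n`, there is an LCD MDS `(n, r, n−r+1)` code over some finite field `GF(p^β)` of
characteristic `p`. -/
theorem exists_LCD_MDS_code (n r p : ℕ) [Fact p.Prime] (hr0 : 0 < r) (hrn : r < n)
    (hodd : Odd n ∨ Odd r) (hpn : ¬ p ∣ n) :
    ∃ β : ℕ, 1 ≤ β ∧ ∃ C : Submodule (GaloisField p β) (Fin n → GaloisField p β),
      Module.finrank (GaloisField p β) C = r ∧ minDist C = n - r + 1 ∧
        C ⊓ dualCode C = ⊥ := by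
  have hcard := lt_mk_galoisField p (k := 2 * n + 2) (by lia)
  exact ⟨2 * n + 2, by lia, exists_LCD_MDS_code_general hr0 hrn.le
    ((Nat.cast_le.2 (by lia)).trans hcard.le) ((Nat.cast_le.2 (by lia)).trans_lt hcard)⟩
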